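/- Let x ∈ C⁴(I;ℝ²) with c₀ ≤ |x_ρ| ≤ C₀, τ = x_ρ/|x_ρ|, and τ_j = δx_j/|δx_j| on the uniform grid ρ_j = jh. Then (τ_{j+1} − τ_j)/h = τ_ρ(ρ_j) + O(h²): there exists C with |(τ_{j+1} − τ_j)/h − τ_ρ(ρ_j)| ≤ C h² for all j and small h. -/

import Mathlib

open scoped RealInnerProductSpace
open Set

noncomputable section

abbrev E2 := EuclideanSpace ℝ (Fin 2)

/-- Clockwise rotation through π/2. -/
def rot (v : E2) : E2 := (WithLp.equiv 2 (Fin 2 → ℝ)).symm ![v 1, -v 0]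

/-!
The unit secant `T (a, b)` of a regular `C⁴` curve `x` is the normalised divided difference
`∫₀¹ x' (a + θ (b - a)) dθ`. It is `C³` near the diagonal, symmetric, and `T (s, s) = τ s`, so
`τ_{j+1} - τ_j = T (s, s + h) - T (s, s - h)` with `s = ρ_j` is a symmetric difference of one `C³`
function at `(s, s)`, equal to `2 h ∂₂T (s, s) + O(h³)`. Symmetry of `T` gives
`2 ∂₂T (s, s) = τ' s`. The constant is locally uniform in `s`, hence uniform on the compact period.
-/

open Asymptotics Filter Function Topology
open NormedSpace (normalize)

section ParametricIntegral

lemma contDiff_fderiv_fst {𝕜 X Y Z : Type*} [NontriviallyNormedField 𝕜]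
    [NormedAddCommGroup X] [NormedSpace 𝕜 X] [NormedAddCommGroup Y] [NormedSpace 𝕜 Y]
    [NormedAddCommGroup Z] [NormedSpace 𝕜 Z] {n : WithTop ℕ∞} {G : X → Y → Z}
    (hG : ContDiff 𝕜 (n + 1) (uncurry G)) :
    ContDiff 𝕜 n fun q : X × Y => fderiv 𝕜 (fun p => G p q.2) q.1 :=
  ContDiff.fderiv (f := fun (q : X × Y) p => G p q.2)
    (hG.comp (contDiff_snd.prodMk contDiff_fst.snd)) contDiff_fst le_rfl

variable {P E : Type*} [NormedAddCommGroup P] [NormedSpace ℝ P] [FiniteDimensional ℝ P]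
  [NormedAddCommGroup E] [NormedSpace ℝ E]

lemma hasFDerivAt_intervalIntegral_of_contDiff {G : P → ℝ → E}
    (hG : ContDiff ℝ 1 (uncurry G)) (a b : ℝ) (p₀ : P) :
    HasFDerivAt (fun p => ∫ θ in a..b, G p θ)
      (∫ θ in a..b, fderiv ℝ (fun p => G p θ) p₀) p₀ := by
  have := FiniteDimensional.proper ℝ P
  have hG' : Continuous fun q : P × ℝ => fderiv ℝ (fun p => G p q.2) q.1 :=
    (contDiff_fderiv_fst (n := 0) (by simpa using hG)).continuous
  obtain ⟨C, hC⟩ := ((isCompact_closedBall p₀ 1).prod isCompact_uIcc).exists_bound_of_continuousOn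
    (hG'.continuousOn (s := Metric.closedBall p₀ 1 ×ˢ uIcc a b))
  refine intervalIntegral.hasFDerivAt_integral_of_dominated_of_fderiv_le
    (bound := fun _ => C) (Metric.closedBall_mem_nhds p₀ one_pos)
    (.of_forall fun p => (hG.continuous.comp (.prodMk_right p)).aestronglyMeasurable)
    ((hG.continuous.comp (.prodMk_right p₀)).intervalIntegrable a b)
    (hG'.comp (.prodMk_right p₀)).aestronglyMeasurable
    (.of_forall fun θ hθ p hp => hC (p, θ) ⟨hp, uIoc_subset_uIcc hθ⟩)
    intervalIntegrable_const (.of_forall fun θ _ p _ => ?_)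
  have hGθ : ContDiff ℝ 1 fun p => G p θ := hG.comp (contDiff_id.prodMk contDiff_const)
  exact (hGθ.differentiable one_ne_zero p).hasFDerivAt

lemma contDiff_intervalIntegral {n : ℕ} {G : P → ℝ → E} (hG : ContDiff ℝ n (uncurry G))
    (a b : ℝ) : ContDiff ℝ n fun p => ∫ θ in a..b, G p θ := by
  induction n generalizing G with
  | zero =>
    rw [Nat.cast_zero, contDiff_zero] at hG ⊢
    exact intervalIntegral.continuous_parametric_intervalIntegral_of_continuous' hG a b
  | succ n ih =>
    push_cast at hG ⊢
    have hderiv := hasFDerivAt_intervalIntegral_of_contDiff (hG.of_le le_add_self) a b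
    have hG' := contDiff_fderiv_fst hG
    refine contDiff_succ_iff_fderiv_apply.2
      ⟨fun p => (hderiv p).differentiableAt, by simp, fun v => ?_⟩
    have hfderiv (p : P) : fderiv ℝ (fun p => ∫ θ in a..b, G p θ) p v
        = ∫ θ in a..b, fderiv ℝ (fun p => G p θ) p v := by
      rw [(hderiv p).fderiv, ContinuousLinearMap.intervalIntegral_apply]
      exact (hG'.continuous.comp (.prodMk_right p)).intervalIntegrable a b
    simpa only [hfderiv] using ih (hG'.clm_apply contDiff_const)

end ParametricIntegral

section DividedDifference

lemma dslope_comm {𝕜 F : Type*} [NontriviallyNormedField 𝕜] [NormedAddCommGroup F]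
    [NormedSpace 𝕜 F] (f : 𝕜 → F) (a b : 𝕜) : dslope f a b = dslope f b a := by
  rcases eq_or_ne a b with rfl | hab
  · rfl
  · rw [dslope_of_ne f hab.symm, dslope_of_ne f hab, slope_comm]

variable {E : Type*} [NormedAddCommGroup E] [NormedSpace ℝ E] [CompleteSpace E]

lemma dslope_eq_integral_deriv {f : ℝ → E} (hf : ContDiff ℝ 1 f) (a b : ℝ) :
    dslope f a b = ∫ θ in (0 : ℝ)..1, deriv f (a + θ * (b - a)) := by
  rcases eq_or_ne b a with rfl | hab
  · simp
  · have h := intervalIntegral.integral_unitInterval_deriv_eq_sub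
      (f := f) (f' := deriv f) (z₀ := a) (z₁ := b - a)
      (hf.continuous_deriv_one.comp_continuousOn (by fun_prop))
      (fun t _ => (hf.differentiable one_ne_zero _).hasDerivAt)
    rw [add_sub_cancel] at h
    rw [dslope_of_ne f hab, slope_def_module, ← h, inv_smul_smul₀ (sub_ne_zero.2 hab)]
    rfl

lemma contDiff_dslope {f : ℝ → E} {n : ℕ} (hf : ContDiff ℝ (n + 1) f) :
    ContDiff ℝ n fun z : ℝ × ℝ => dslope f z.1 z.2 := by
  simp only [dslope_eq_integral_deriv (hf.of_le le_add_self)]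
  have hf' : ContDiff ℝ n (deriv f) := hf.deriv'
  exact contDiff_intervalIntegral (G := fun (z : ℝ × ℝ) θ => deriv f (z.1 + θ * (z.2 - z.1)))
    (hf'.comp (by fun_prop)) 0 1

end DividedDifference

lemma isBigO_principal_prod_of_isCompact {X Y A B : Type*} [TopologicalSpace X] [Norm A]
    [SeminormedAddCommGroup B] {f : X × Y → A} {g : X × Y → B} {K : Set X} {l : Filter Y}
    (hK : IsCompact K) (h : ∀ z ∈ K, f =O[𝓝 z ×ˢ l] g) : f =O[𝓟 K ×ˢ l] g := by
  refine hK.induction_on (p := fun s => f =O[𝓟 s ×ˢ l] g) (by simp)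
    (fun s t hst ht => ht.mono (prod_mono_left l (principal_mono.2 hst)))
    (fun s t hs ht => by simpa only [← sup_principal, sup_prod] using hs.sup ht)
    (fun z hz => ?_)
  obtain ⟨C, hC⟩ := (h z hz).bound
  obtain ⟨p, hp, q, hq, hpq⟩ := eventually_prod_iff.1 hC
  exact ⟨{z | p z}, mem_nhdsWithin_of_mem_nhds hp, .of_bound C
    (eventually_prod_iff.2 ⟨p, eventually_principal.2 fun _ => id, q, hq, hpq⟩)⟩

section SymmetricDifference

lemma tendsto_add_nhds_prod_nhds_zero {X : Type*} [TopologicalSpace X] [AddZeroClass X]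
    [ContinuousAdd X] (z : X) : Tendsto (fun q : X × X => q.1 + q.2) (𝓝 z ×ˢ 𝓝 0) (𝓝 z) := by
  simpa using (tendsto_fst (f := 𝓝 z)).add (tendsto_snd (g := 𝓝 (0 : X)))

lemma tendsto_sub_nhds_prod_nhds_zero {X : Type*} [TopologicalSpace X] [AddGroup X]
    [ContinuousSub X] (z : X) : Tendsto (fun q : X × X => q.1 - q.2) (𝓝 z ×ˢ 𝓝 0) (𝓝 z) := by
  simpa using (tendsto_fst (f := 𝓝 z)).sub (tendsto_snd (g := 𝓝 (0 : X)))

variable {F E : Type*} [NormedAddCommGroup F] [NormedSpace ℝ F]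
  [NormedAddCommGroup E] [NormedSpace ℝ E]

lemma isBigO_norm_pow_succ_of_hasFDerivAt {P : Type*} {l : Filter P} {n : ℕ} {R : P → F → E}
    {R' : P → F → F →L[ℝ] E} (h₀ : ∀ z, R z 0 = 0)
    (hd : ∀ᶠ q in l ×ˢ 𝓝 (0 : F), HasFDerivAt (R q.1) (R' q.1 q.2) q.2)
    (hR' : (fun q : P × F => R' q.1 q.2) =O[l ×ˢ 𝓝 0] fun q => ‖q.2‖ ^ n) :
    (fun q : P × F => R q.1 q.2) =O[l ×ˢ 𝓝 0] fun q => ‖q.2‖ ^ (n + 1) := by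
  obtain ⟨C, hC, hbound⟩ := hR'.exists_nonneg
  obtain ⟨⟨A, r⟩, ⟨hA, hr⟩, hAr⟩ :=
    (l.basis_sets.prod Metric.nhds_basis_ball).eventually_iff.1 (hd.and hbound.bound)
  refine .of_bound C ((l.basis_sets.prod Metric.nhds_basis_ball).eventually_iff.2
    ⟨(A, r), ⟨hA, hr⟩, ?_⟩)
  rintro ⟨z, w⟩ ⟨hz, hw⟩
  have hsub : ∀ u ∈ Metric.closedBall (0 : F) ‖w‖, (z, u) ∈ A ×ˢ Metric.ball (0 : F) r :=
    fun u hu => ⟨hz, Metric.closedBall_subset_ball (mem_ball_zero_iff.1 hw) hu⟩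
  have hmvt : ‖R z w - R z 0‖ ≤ C * ‖w‖ ^ n * ‖w - 0‖ :=
    (convex_closedBall (0 : F) ‖w‖).norm_image_sub_le_of_norm_hasFDerivWithin_le
      (fun u hu => (hAr (hsub u hu)).1.hasFDerivWithinAt)
      (fun u hu => (hAr (hsub u hu)).2.trans (by
        rw [norm_pow, norm_norm]
        gcongr
        simpa using hu)) (by simp) (by simp)
  simpa [h₀, pow_succ, mul_assoc] using hmvt

lemma eventually_hasFDerivAt_comp_add_and_comp_sub {φ : F → E} {z₀ : F}
    (hφ : ContDiffAt ℝ 1 φ z₀) :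
    ∀ᶠ q in 𝓝 z₀ ×ˢ 𝓝 (0 : F),
      HasFDerivAt (fun w => φ (q.1 + w)) (fderiv ℝ φ (q.1 + q.2)) q.2 ∧
        HasFDerivAt (fun w => φ (q.1 - w)) (-fderiv ℝ φ (q.1 - q.2)) q.2 := by
  have hd : ∀ᶠ z in 𝓝 z₀, HasFDerivAt φ (fderiv ℝ φ z) z :=
    (hφ.eventually (by simp)).mono fun z hz => hz.differentiableAt_one.hasFDerivAt
  filter_upwards [tendsto_add_nhds_prod_nhds_zero z₀ hd, tendsto_sub_nhds_prod_nhds_zero z₀ hd]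
    with q hadd hsub
  exact ⟨HasFDerivAt.comp (g := φ) q.2 hadd ((hasFDerivAt_id q.2).const_add q.1),
    by simpa using! HasFDerivAt.comp (g := φ) q.2 hsub ((hasFDerivAt_id q.2).const_sub q.1)⟩

lemma isBigO_add_sub_sub {φ : F → E} {z₀ : F} (hφ : ContDiffAt ℝ 1 φ z₀) :
    (fun q : F × F => φ (q.1 + q.2) - φ (q.1 - q.2)) =O[𝓝 z₀ ×ˢ 𝓝 0] fun q => ‖q.2‖ ^ 1 := by
  obtain ⟨K, U, hU, hK⟩ := hφ.exists_lipschitzOnWith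
  refine .of_bound (K * 2) ?_
  filter_upwards [tendsto_add_nhds_prod_nhds_zero z₀ hU, tendsto_sub_nhds_prod_nhds_zero z₀ hU]
    with q hadd hsub
  refine (hK.norm_sub_le hadd hsub).trans_eq ?_
  rw [add_sub_sub_cancel, ← two_smul ℝ, norm_smul]
  simp [mul_assoc]

lemma isBigO_add_add_sub_sub_two_smul {φ : F → E} {z₀ : F} (hφ : ContDiffAt ℝ 2 φ z₀) :
    (fun q : F × F => φ (q.1 + q.2) + φ (q.1 - q.2) - (2 : ℝ) • φ q.1)
      =O[𝓝 z₀ ×ˢ 𝓝 0] fun q => ‖q.2‖ ^ 2 := by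
  refine isBigO_norm_pow_succ_of_hasFDerivAt
    (R := fun z w => φ (z + w) + φ (z - w) - (2 : ℝ) • φ z)
    (R' := fun z w => fderiv ℝ φ (z + w) - fderiv ℝ φ (z - w))
    (fun z => by simp [two_smul]) ?_ (isBigO_add_sub_sub (hφ.fderiv_right (by norm_num)))
  filter_upwards [eventually_hasFDerivAt_comp_add_and_comp_sub (hφ.of_le one_le_two)]
    with q ⟨hadd, hsub⟩
  simpa [sub_eq_add_neg] using (hadd.add hsub).sub_const ((2 : ℝ) • φ q.1)

lemma isBigO_add_sub_sub_sub_two_smul_fderiv {φ : F → E} {z₀ : F} (hφ : ContDiffAt ℝ 3 φ z₀) :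
    (fun q : F × F => φ (q.1 + q.2) - φ (q.1 - q.2) - (2 : ℝ) • fderiv ℝ φ q.1 q.2)
      =O[𝓝 z₀ ×ˢ 𝓝 0] fun q => ‖q.2‖ ^ 3 := by
  refine isBigO_norm_pow_succ_of_hasFDerivAt
    (R := fun z w => φ (z + w) - φ (z - w) - (2 : ℝ) • fderiv ℝ φ z w)
    (R' := fun z w => fderiv ℝ φ (z + w) + fderiv ℝ φ (z - w) - (2 : ℝ) • fderiv ℝ φ z)
    (fun z => by simp) ?_ (isBigO_add_add_sub_sub_two_smul (hφ.fderiv_right (by norm_num)))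
  filter_upwards [eventually_hasFDerivAt_comp_add_and_comp_sub (hφ.of_le (by norm_num))]
    with q ⟨hadd, hsub⟩
  simpa [sub_eq_add_neg] using (hadd.fun_sub hsub).fun_sub ((2 : ℝ) • fderiv ℝ φ q.1).hasFDerivAt

lemma hasDerivAt_diag_of_symm {T : ℝ × ℝ → E} (hT : ∀ z, T z.swap = T z) {s : ℝ}
    (hd : DifferentiableAt ℝ T (s, s)) :
    HasDerivAt (fun s => T (s, s)) ((2 : ℝ) • fderiv ℝ T (s, s) (0, 1)) s := by
  have hpartial : fderiv ℝ T (s, s) (1, 0) = fderiv ℝ T (s, s) (0, 1) := by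
    have hswap : HasFDerivAt T (fderiv ℝ T (s, s) ∘L .prod (.snd ℝ ℝ ℝ) (.fst ℝ ℝ ℝ)) (s, s) := by
      refine (HasFDerivAt.comp (g := T) (f := Prod.swap) (s, s) hd.hasFDerivAt
        (hasFDerivAt_snd.prodMk hasFDerivAt_fst)).congr_of_eventuallyEq (.of_forall fun z => ?_)
      exact (hT z).symm
    simpa using DFunLike.congr_fun hswap.fderiv (1, 0)
  have hsum : fderiv ℝ T (s, s) (1, 1) = (2 : ℝ) • fderiv ℝ T (s, s) (0, 1) := by
    rw [two_smul]
    nth_rw 1 [← hpartial]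
    rw [← map_add, Prod.mk_add_mk, add_zero, zero_add]
  rw [← hsum]
  exact HasFDerivAt.comp_hasDerivAt (f := fun s => (s, s)) s hd.hasFDerivAt
    ((hasDerivAt_id s).prodMk (hasDerivAt_id s))

lemma isBigO_sub_sub_smul_deriv_diag_of_symm {T : ℝ × ℝ → E} (hT : ∀ z, T z.swap = T z) {s₀ : ℝ}
    (hd : ContDiffAt ℝ 3 T (s₀, s₀)) :
    (fun q : ℝ × ℝ => T (q.1, q.1 + q.2) - T (q.1, q.1 - q.2)
        - q.2 • deriv (fun s => T (s, s)) q.1)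
      =O[𝓝 s₀ ×ˢ 𝓝 0] fun q => ‖q.2‖ ^ 3 := by
  have hdiag : Tendsto (fun s : ℝ => (s, s)) (𝓝 s₀) (𝓝 (s₀, s₀)) :=
    (continuous_id.prodMk continuous_id).tendsto s₀
  have hvert : Tendsto (fun h : ℝ => ((0 : ℝ), h)) (𝓝 0) (𝓝 0) :=
    (Continuous.prodMk_right (0 : ℝ)).tendsto 0
  have hdiff : ∀ᶠ s in 𝓝 s₀, DifferentiableAt ℝ T (s, s) :=
    hdiag.eventually ((hd.eventually (by simp)).mono fun z hz => hz.differentiableAt (by simp))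
  refine ((isBigO_add_sub_sub_sub_two_smul_fderiv hd).comp_tendsto
    (hdiag.prodMap hvert)).congr' ?_ (.of_forall fun q => by simp [Prod.norm_def])
  filter_upwards [hdiff.prod_inl (𝓝 0)] with q hq
  have hsmul : ((0 : ℝ), q.2) = q.2 • ((0 : ℝ), (1 : ℝ)) := by simp
  rw [(hasDerivAt_diag_of_symm hT hq).deriv]
  simp only [comp_apply, Prod.map, hsmul, map_smul, smul_comm q.2 (2 : ℝ)]
  simp

end SymmetricDifference

lemma periodic_deriv {𝕜 F : Type*} [NontriviallyNormedField 𝕜] [NormedAddCommGroup F]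
    [NormedSpace 𝕜 F] {f : 𝕜 → F} {c : 𝕜} (hf : Periodic f c) : Periodic (deriv f) c := fun s => by
  rw [← deriv_comp_add_const, hf.funext]

section UnitSecant

variable {E : Type*} [NormedAddCommGroup E]

section NormedSpace

variable [NormedSpace ℝ E]

/-- The direction of the secant of `x` through the parameters `z.1` and `z.2`, in the sense of
increasing parameter. On the diagonal `dslope` makes it the unit tangent, or `0` where
`deriv x` vanishes; it is symmetric in the two parameters because slopes are. -/
def unitSecant (x : ℝ → E) (z : ℝ × ℝ) : E :=
  NormedSpace.normalize (dslope x z.1 z.2)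

/-- The truncation error at `s` in approximating the derivative of the unit tangent `x' / |x'|` by
the difference quotient, of step `h > 0`, of the unit secants of `x` on the two sides of `s`. -/
def tangentTruncationError (x : ℝ → E) (s h : ℝ) : E :=
  h⁻¹ • (normalize (x (s + h) - x s) - normalize (x s - x (s - h)))
    - deriv (fun ρ => normalize (deriv x ρ)) s

lemma unitSecant_swap (x : ℝ → E) (z : ℝ × ℝ) : unitSecant x z.swap = unitSecant x z :=
  congrArg NormedSpace.normalize (dslope_comm x _ _)

lemma unitSecant_self (x : ℝ → E) (s : ℝ) : unitSecant x (s, s) = normalize (deriv x s) := by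
  simp [unitSecant]

lemma unitSecant_of_lt (x : ℝ → E) {a b : ℝ} (hab : a < b) :
    unitSecant x (a, b) = normalize (x b - x a) := by
  rw [unitSecant, dslope_of_ne x hab.ne', slope_def_module,
    NormedSpace.normalize_smul_of_pos (inv_pos.2 (sub_pos.2 hab))]

lemma periodic_tangentTruncationError {x : ℝ → E} {c : ℝ} (hx : Periodic x c) (h : ℝ) :
    Periodic (fun s => tangentTruncationError x s h) c := by
  have htangent : Periodic (deriv fun ρ => normalize (deriv x ρ)) c :=
    periodic_deriv ((periodic_deriv hx).comp normalize)
  intro s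
  simp only [tangentTruncationError, add_right_comm s c h, add_sub_right_comm s c h, hx _,
    htangent s]

end NormedSpace

variable [InnerProductSpace ℝ E]

lemma contDiffAt_normalize {n : WithTop ℕ∞} {v : E} (hv : v ≠ 0) :
    ContDiffAt ℝ n (normalize : E → E) v :=
  ((contDiffAt_norm ℝ hv).inv (norm_ne_zero_iff.2 hv)).smul contDiffAt_id

lemma contDiffAt_unitSecant_diag [CompleteSpace E] {x : ℝ → E} {n : ℕ}
    (hx : ContDiff ℝ (n + 1) x) {s : ℝ} (hs : deriv x s ≠ 0) :
    ContDiffAt ℝ n (unitSecant x) (s, s) :=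
  ContDiffAt.comp (s, s) (contDiffAt_normalize (by simpa using hs)) (contDiff_dslope hx).contDiffAt

lemma isBigO_tangentTruncationError_nhds [CompleteSpace E] {x : ℝ → E} (hx : ContDiff ℝ 4 x)
    {s₀ : ℝ} (hs₀ : deriv x s₀ ≠ 0) :
    (fun q : ℝ × ℝ => tangentTruncationError x q.1 q.2) =O[𝓝 s₀ ×ˢ 𝓝[>] 0] fun q => q.2 ^ 2 := by
  have hsymm := isBigO_sub_sub_smul_deriv_diag_of_symm (unitSecant_swap x)
    (contDiffAt_unitSecant_diag (n := 3) (by norm_num [hx]) hs₀)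
  have hquot := (isBigO_refl (fun q : ℝ × ℝ => q.2⁻¹) (𝓝 s₀ ×ˢ 𝓝[>] 0)).smul
    (hsymm.mono (prod_mono_right _ nhdsWithin_le_nhds))
  have hpos : ∀ᶠ q in 𝓝 s₀ ×ˢ 𝓝[>] (0 : ℝ), 0 < q.2 :=
    eventually_mem_nhdsWithin.prod_inr (𝓝 s₀)
  refine hquot.congr' (hpos.mono fun q hq => ?_) (hpos.mono fun q hq => ?_)
  · have hback : unitSecant x (q.1, q.1 - q.2) = normalize (x q.1 - x (q.1 - q.2)) :=
      (unitSecant_swap x _).symm.trans (unitSecant_of_lt x (sub_lt_self q.1 hq))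
    simp only [unitSecant_self, unitSecant_of_lt x (lt_add_of_pos_right q.1 hq), hback]
    rw [smul_sub, inv_smul_smul₀ hq.ne', tangentTruncationError]
  · simp only [smul_eq_mul, Real.norm_of_nonneg hq.le]
    field_simp

theorem discrete_tangent_derivative_consistency_general [CompleteSpace E] {x : ℝ → E}
    (hx : ContDiff ℝ 4 x) {c : ℝ} (hc : c ≠ 0) (hper : Periodic x c) (hreg : ∀ ρ, deriv x ρ ≠ 0) :
    ∃ C > 0, ∃ hstar > 0, ∀ h, 0 < h → h ≤ hstar → ∀ s,
      ‖h⁻¹ • (normalize (x (s + h) - x s) - normalize (x s - x (s - h)))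
        - deriv (fun ρ => normalize (deriv x ρ)) s‖ ≤ C * h ^ 2 := by
  let period := uIcc 0 (0 + c)
  obtain ⟨C, hC, hbigO⟩ := (isBigO_principal_prod_of_isCompact (K := period) isCompact_uIcc
    fun s _ => isBigO_tangentTruncationError_nhds hx (hreg s)).exists_pos
  have hsmall : ∀ᶠ h in 𝓝[>] (0 : ℝ), ∀ s ∈ period, ‖tangentTruncationError x s h‖ ≤ C * h ^ 2 := by
    rw [IsBigOWith_def, eventually_swap_iff, eventually_prod_principal_iff] at hbigO
    simpa using hbigO
  obtain ⟨hstar, hstar_pos, hbound⟩ := mem_nhdsGT_iff_exists_Ioc_subset.1 hsmall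
  refine ⟨C, hC, hstar, hstar_pos, fun h h_pos h_le s => ?_⟩
  have hperiodic := periodic_tangentTruncationError hper h
  obtain ⟨t, ht, hts⟩ := (hperiodic.image_uIcc hc 0).symm ▸ mem_range_self s
  exact (congrArg norm hts).symm.trans_le (hbound ⟨h_pos, h_le⟩ t ht)

end UnitSecant

/-- second order consistency of the discrete derivative of the
tangents: `(τ_{j+1} − τ_j)/h = τ_ρ(ρ_j) + O(h²)`. -/
theorem discrete_tangent_derivative_consistency
    (x : ℝ → E2) (c₀ C₀ : ℝ) (hc₀ : 0 < c₀) (hcC : c₀ ≤ C₀)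
    (hx : ContDiff ℝ 4 x)
    (hper : ∀ ρ, x (ρ + 1) = x ρ)
    (hlow : ∀ ρ, c₀ ≤ ‖deriv x ρ‖) (hup : ∀ ρ, ‖deriv x ρ‖ ≤ C₀) :
    ∃ C > (0:ℝ), ∃ hstar > (0:ℝ), ∀ J : ℕ, 0 < J → (1:ℝ)/J ≤ hstar → ∀ j : ℤ,
      ‖(J:ℝ) • (‖x ((j+1) * ((1:ℝ)/J)) - x (j * ((1:ℝ)/J))‖⁻¹ •
            (x ((j+1) * ((1:ℝ)/J)) - x (j * ((1:ℝ)/J)))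
          - ‖x (j * ((1:ℝ)/J)) - x ((j-1) * ((1:ℝ)/J))‖⁻¹ •
            (x (j * ((1:ℝ)/J)) - x ((j-1) * ((1:ℝ)/J))))
        - deriv (fun ρ => ‖deriv x ρ‖⁻¹ • deriv x ρ) (j * ((1:ℝ)/J))‖
      ≤ C * ((1:ℝ)/J) ^ 2 := by
  obtain ⟨C, hC, hstar, hstar_pos, hbound⟩ := discrete_tangent_derivative_consistency_general hx
    one_ne_zero hper fun ρ => norm_pos_iff.1 (hc₀.trans_le (hlow ρ))
  refine ⟨C, hC, hstar, hstar_pos, fun J hJ hJstar j => ?_⟩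
  have h := hbound (1 / J) (by positivity) hJstar (j * (1 / J))
  rw [← add_one_mul, ← sub_one_mul, inv_div, div_one] at h
  exact h
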